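/- Assume α > 1, both λ and β are nondecreasing on [t₀,∞), b(t) > β'(t) + β(t)/t (equivalently w(t) > 0) for every t ≥ t₀, there exists ε ∈ (0, α−1) with (α−3)·w(t) − t·w'(t) ≥ ε·b(t) for every t ≥ t₀, ∫_{t₀}^{∞} [ λ'(t)²·t³·β(t)²/λ(t)⁴ − λ'(t)·t²·b(t)/(2·λ(t)²) ]_+ dt < +∞ (where [·]_+ denotes the positive part), and there exists C > 0 with (d/dt)(t²·b(t)) ≤ C·t·b(t) for every t ≥ t₀. Then t²·b(t)·(Φ(prox_{λ(t)Φ}(x(t))) − Φ*) → 0 as t → +∞, i.e. Φ(prox_{λ(t)Φ}(x(t))) − Φ* = o(1/(t²·b(t))). -/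

import Mathlib

open Set MeasureTheory Filter Real

noncomputable section

/-- Convexity for extended-real-valued functions. -/
def EConvexOn {H : Type*} [NormedAddCommGroup H] [NormedSpace ℝ H] (f : H → EReal) : Prop :=
  ∀ x y : H, ∀ a c : ℝ, 0 ≤ a → 0 ≤ c → a + c = 1 →
    f (a • x + c • y) ≤ (a : EReal) * f x + (c : EReal) * f y

/-- `p` is the proximal point of `f` with parameter `l` at `x`, i.e. the (unique) minimizer of
`y ↦ f y + ‖x - y‖² / (2l)`. -/
def IsProxPt {H : Type*} [NormedAddCommGroup H] [InnerProductSpace ℝ H]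
    (f : H → EReal) (l : ℝ) (x p : H) : Prop :=
  ∀ y : H, f p + ((‖x - p‖ ^ 2 / (2 * l) : ℝ) : EReal)
      ≤ f y + ((‖x - y‖ ^ 2 / (2 * l) : ℝ) : EReal)

/-- The Moreau envelope of `f` with parameter `l` (as a real number). -/
def moreau {H : Type*} [NormedAddCommGroup H] [InnerProductSpace ℝ H]
    (f : H → EReal) (l : ℝ) (x : H) : ℝ :=
  (⨅ y : H, f y + ((‖x - y‖ ^ 2 / (2 * l) : ℝ) : EReal)).toReal

theorem aux_subgrad {H : Type*} [NormedAddCommGroup H] [InnerProductSpace ℝ H]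
    (Φ : H → EReal) (hbot : ∀ y, Φ y ≠ ⊥) (hconv : EConvexOn Φ) (l : ℝ) (hl : 0 < l)
    (x p y : H) (hp : IsProxPt Φ l x p) (hpt : Φ p ≠ ⊤) (hyt : Φ y ≠ ⊤) :
    (Φ p).toReal + inner ℝ (l⁻¹ • (x - p)) (y - p) ≤ (Φ y).toReal := by
  obtain ⟨P, hP⟩ : ∃ P : ℝ, Φ p = P := ⟨_, (EReal.coe_toReal hpt (hbot p)).symm⟩
  obtain ⟨Y, hY⟩ : ∃ P : ℝ, Φ y = P := ⟨_, (EReal.coe_toReal hyt (hbot y)).symm⟩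
  rw [hP, hY, EReal.toReal_coe, EReal.toReal_coe, real_inner_smul_left]
  have key : ∀ θ : ℝ, 0 < θ → θ ≤ 1 →
      P + l⁻¹ * inner ℝ (x - p) (y - p) ≤ Y + θ * (‖y - p‖ ^ 2 / (2 * l)) := by
    intro θ h0 h1
    have e1 := hp ((1 - θ) • p + θ • y)
    have e2 := hconv p y (1 - θ) θ (by linarith) h0.le (by ring)
    rw [hP, hY] at e2
    rw [hP] at e1
    have e3 : ((P : EReal) + ((‖x - p‖ ^ 2 / (2 * l) : ℝ) : EReal)) ≤
        (((1 - θ : ℝ) : EReal) * P + (θ : EReal) * Y) +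
        ((‖x - ((1 - θ) • p + θ • y)‖ ^ 2 / (2 * l) : ℝ) : EReal) :=
      e1.trans (add_le_add_left e2 _)
    have e4 : P + ‖x - p‖ ^ 2 / (2 * l) ≤ ((1 - θ) * P + θ * Y) +
        ‖x - ((1 - θ) • p + θ • y)‖ ^ 2 / (2 * l) := by exact_mod_cast e3
    have e5 : x - ((1 - θ) • p + θ • y) = (x - p) - θ • (y - p) := by module
    rw [e5, norm_sub_sq_real (x - p), real_inner_smul_right, norm_smul, mul_pow, Real.norm_eq_abs,
      sq_abs] at e4
    have e6 : (‖x - p‖ ^ 2 - 2 * (θ * inner ℝ (x - p) (y - p)) + θ ^ 2 * ‖y - p‖ ^ 2) / (2 * l)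
      = ‖x - p‖ ^ 2 / (2 * l) - θ * (l⁻¹ * inner ℝ (x - p) (y - p))
        + θ * (θ * (‖y - p‖ ^ 2 / (2 * l))) := by
      field_simp
    rw [e6] at e4
    have : θ * (P + l⁻¹ * inner ℝ (x - p) (y - p)) ≤ θ * (Y + θ * (‖y - p‖ ^ 2 / (2 * l))) := by
      nlinarith
    exact le_of_mul_le_mul_left this h0
  have hD : 0 ≤ ‖y - p‖ ^ 2 / (2 * l) := by positivity
  set D := ‖y - p‖ ^ 2 / (2 * l)
  refine le_of_forall_pos_le_add fun e he => ?_
  have := key (min 1 (e / (D + 1))) (by positivity) (min_le_left _ _)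
  have h2 : min 1 (e / (D + 1)) * D ≤ e := by
    calc _ ≤ e / (D + 1) * D := by gcongr; exact min_le_right _ _
      _ ≤ e / (D + 1) * (D + 1) := by gcongr; linarith
      _ = e := by field_simp
  linarith

theorem aux_phi_deriv {H : Type*} [NormedAddCommGroup H] [InnerProductSpace ℝ H]
    (φ : ℝ → ℝ) (p G : ℝ → H) (p' G' : H) (t : ℝ) (hp : HasDerivAt p p' t)
    (hG : HasDerivAt G G' t)
    (h1 : ∀ᶠ s in nhds t, φ t + inner ℝ (G t) (p s - p t) ≤ φ s)
    (h2 : ∀ᶠ s in nhds t, φ s + inner ℝ (G s) (p t - p s) ≤ φ t) :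
    HasDerivAt φ (inner ℝ (G t) p') t := by
  have hr : HasDerivAt (fun s => φ s - inner ℝ (G t) (p s)) 0 t := by
    rw [hasDerivAt_iff_isLittleO]
    have hpO : (fun s => p s - p t) =O[nhds t] fun s => s - t := hp.isBigO_sub
    have hGo : (fun s => G s - G t) =o[nhds t] fun _ => (1 : ℝ) := by
      rw [Asymptotics.isLittleO_one_iff]
      simpa using hG.continuousAt.tendsto.sub_const (G t)
    have := hGo.norm_left.mul_isBigO hpO.norm_left
    simp only [one_mul] at this
    refine (Asymptotics.IsBigO.of_bound 1 ?_).trans_isLittleO this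
    filter_upwards [h1, h2] with s a1 a2
    have b1 : inner ℝ (G s) (p t - p s) = - inner ℝ (G s - G t) (p s - p t)
        - inner ℝ (G t) (p s - p t) := by
      simp only [inner_sub_left, inner_sub_right]; ring
    have b2 := real_inner_le_norm (G s - G t) (p s - p t)
    have b3 : inner ℝ (G t) (p s - p t) = inner ℝ (G t) (p s) - inner ℝ (G t) (p t) :=
      inner_sub_right _ _ _
    simp only [smul_zero, sub_zero, norm_mul, one_mul, Real.norm_eq_abs, abs_norm]
    rw [abs_le]
    constructor <;> nlinarith [norm_nonneg (G s - G t), norm_nonneg (p s - p t),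
      mul_nonneg (norm_nonneg (G s - G t)) (norm_nonneg (p s - p t))]
  have hi : HasDerivAt (fun s => inner ℝ (G t) (p s)) (inner ℝ (G t) p') t := by
    simpa using (hasDerivAt_const t (G t)).inner ℝ hp
  have := hr.add hi
  rw [zero_add] at this
  refine this.congr_of_eventuallyEq (Eventually.of_forall fun s => ?_)
  simp

theorem aux_mono {H : Type*} [NormedAddCommGroup H] [InnerProductSpace ℝ H]
    (p G : ℝ → H) (p' G' : H) (t : ℝ) (hp : HasDerivAt p p' t)
    (hG : HasDerivAt G G' t)
    (h1 : ∀ᶠ s in nhds t, 0 ≤ inner ℝ (G s - G t) (p s - p t)) :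
    0 ≤ inner ℝ G' p' := by
  have a := (hasDerivAt_iff_tendsto_slope.1 hG).inner (hasDerivAt_iff_tendsto_slope.1 hp) (𝕜 := ℝ)
  refine ge_of_tendsto a ?_
  filter_upwards [nhdsWithin_le_nhds h1] with s hs
  simp only [slope_def_module, real_inner_smul_left, real_inner_smul_right]
  rw [← mul_assoc]
  exact mul_nonneg (mul_self_nonneg _) hs

theorem aux_point {H : Type*} [NormedAddCommGroup H] [InnerProductSpace ℝ H]
    (g G v : H) (l m : ℝ) (hl : 0 < l) (hm : 0 ≤ m)
    (h : 0 ≤ inner ℝ g (v - m • G - l • g)) :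
    - inner ℝ v g ≤ m / l * ‖G‖ * ‖v‖ := by
  have h1 : ‖(2 * l) • g - (v - m • G)‖ ≤ ‖v - m • G‖ := by
    have e : ‖(2 * l) • g - (v - m • G)‖ ^ 2 = ‖v - m • G‖ ^ 2
        - 4 * l * inner ℝ g (v - m • G - l • g) := by
      rw [norm_sub_sq_real, norm_smul, mul_pow, Real.norm_eq_abs, sq_abs,
        real_inner_smul_left, inner_sub_right g _ (l • g), real_inner_smul_right g g l, real_inner_self_eq_norm_sq]
      ring
    have := mul_nonneg hl.le h
    exact (sq_le_sq₀ (norm_nonneg _) (norm_nonneg _)).1 (by rw [e]; linarith)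
  have h2 := abs_le.1 (abs_real_inner_le_norm ((2 * l) • g - (v - m • G)) v)
  have h3 : ‖v - m • G‖ ≤ ‖v‖ + m * ‖G‖ := by
    refine (norm_sub_le _ _).trans ?_
    rw [norm_smul, Real.norm_eq_abs, abs_of_nonneg hm]
  have h4 := real_inner_le_norm G v
  have h5 : inner ℝ ((2 * l) • g - (v - m • G)) v = 2 * l * inner ℝ v g - ‖v‖ ^ 2
      + m * inner ℝ G v := by
    simp only [inner_sub_left, real_inner_smul_left, real_inner_self_eq_norm_sq]
    rw [real_inner_comm v g]; ring
  have h6 : ‖(2 * l) • g - (v - m • G)‖ * ‖v‖ ≤ (‖v‖ + m * ‖G‖) * ‖v‖ := by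
    gcongr; exact h1.trans h3
  have h7 : m * inner ℝ G v ≤ m * (‖G‖ * ‖v‖) := by gcongr
  have h8 : m / l * ‖G‖ * ‖v‖ = (m * ‖G‖ * ‖v‖) / l := by ring
  rw [h8, le_div_iff₀ hl]
  nlinarith [h2.1]

/-- limit lemma -/
theorem aux_limit (E W V' E' q h : ℝ → ℝ) (a K M κ : ℝ) (ha : 0 < a) (hM : 0 ≤ M) (hκ : 0 < κ)
    (hE0 : ∀ t ≥ a, 0 ≤ E t) (hW0 : ∀ t ≥ a, 0 ≤ W t) (hK : 0 ≤ K)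
    (hE : ∀ t ≥ a, HasDerivAt E (E' t) t) (hEh : ∀ t ≥ a, E' t ≤ - h t)
    (hh : ∀ t ≥ a, κ * (W t / t) ≤ h t)
    (hV : ∀ t ≥ a, HasDerivAt W (V' t) t) (hVq : ∀ t ≥ a, V' t ≤ K * h t + M * q t)
    (hq0 : ∀ t, 0 ≤ q t) (hq : IntegrableOn q (Set.Ici a)) :
    Tendsto W atTop (nhds 0) := by
  have hconv : ∀ (f : ℝ → ℝ) (B : ℝ), AntitoneOn f (Ici a) → (∀ t ≥ a, B ≤ f t) →
      ∃ L, Tendsto f atTop (nhds L) := by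
    intro f B hf hB
    have hanti : Antitone fun t => f (max a t) := fun s t hst =>
      hf (mem_Ici.2 (le_max_left _ _)) (mem_Ici.2 (le_max_left _ _)) (max_le_max_left _ hst)
    refine ⟨_, (tendsto_atTop_ciInf hanti ⟨B, ?_⟩).congr' ?_⟩
    · rintro _ ⟨t, rfl⟩
      exact hB _ (le_max_left _ _)
    · filter_upwards [eventually_ge_atTop a] with t ht
      simp [max_eq_right ht]
  have hEanti : AntitoneOn E (Ici a) := by
    refine antitoneOn_of_deriv_nonpos (convex_Ici a)
      (fun t ht => (hE t ht).continuousAt.continuousWithinAt)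
      (fun t ht => (hE t (interior_subset ht)).differentiableAt.differentiableWithinAt) ?_
    intro t ht
    have ht : a ≤ t := interior_subset ht
    rw [(hE t ht).deriv]
    have := hEh t ht
    have h1 := hh t ht
    have h2 : 0 ≤ κ * (W t / t) := mul_nonneg hκ.le (div_nonneg (hW0 t ht) (by linarith))
    linarith
  obtain ⟨LE, hLE⟩ := hconv E 0 hEanti hE0
  have hii : ∀ s t, a ≤ s → s ≤ t → IntegrableOn q (Icc s t) := fun s t hs _ =>
    hq.mono_set fun r hr => le_trans hs hr.1
  have hii' : ∀ s t, a ≤ s → s ≤ t → IntervalIntegrable q volume s t := fun s t hs hst =>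
    (intervalIntegrable_iff_integrableOn_Icc_of_le hst).2 (hii s t hs hst)
  have hQanti : AntitoneOn (fun t => W t + K * E t - M * ∫ r in a..t, q r) (Ici a) := by
    intro s hs t ht hst
    have hs : a ≤ s := hs
    have := intervalIntegral.sub_le_integral_of_hasDeriv_right_of_le (a := s) (b := t)
      (g := fun t => W t + K * E t) (g' := fun t => V' t + K * E' t) (φ := fun t => M * q t) hst
      (fun r hr => (((hV r (hs.trans hr.1)).add
        ((hE r (hs.trans hr.1)).const_mul K)).continuousAt.continuousWithinAt))
      (fun r hr => (((hV r (hs.trans hr.1.le)).add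
        ((hE r (hs.trans hr.1.le)).const_mul K)).hasDerivWithinAt))
      ((hii s t hs hst).const_mul M)
      (fun r hr => by
        have h1 := hVq r (hs.trans hr.1.le)
        have h2 := mul_le_mul_of_nonneg_left (hEh r (hs.trans hr.1.le)) hK
        linarith)
    rw [intervalIntegral.integral_const_mul] at this
    have e := intervalIntegral.integral_add_adjacent_intervals (hii' a s le_rfl hs)
      (hii' s t hs hst)
    simp only at this ⊢
    rw [← e]
    linarith
  have hIlim : Tendsto (fun t => ∫ r in a..t, q r) atTop (nhds (∫ r in Ioi a, q r)) :=
    intervalIntegral_tendsto_integral_Ioi a (hq.mono_set Ioi_subset_Ici_self) tendsto_id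
  obtain ⟨LQ, hLQ⟩ := hconv _ (- (M * ∫ r in Ici a, q r)) hQanti (by
    intro t ht
    have h1 : ∫ r in a..t, q r ≤ ∫ r in Ici a, q r := by
      rw [intervalIntegral.integral_of_le ht]
      exact setIntegral_mono_set hq (Eventually.of_forall hq0)
        (Filter.Eventually.of_forall fun r hr => le_of_lt hr.1)
    have h2 := mul_le_mul_of_nonneg_left h1 hM
    have h3 := hW0 t ht
    have h4 := mul_nonneg hK (hE0 t ht)
    linarith)
  have hWl : Tendsto W atTop (nhds (LQ + M * (∫ r in Ioi a, q r) - K * LE)) := by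
    refine ((hLQ.add (hIlim.const_mul M)).sub (hLE.const_mul K)).congr fun t => ?_
    ring
  set L := LQ + M * (∫ r in Ioi a, q r) - K * LE
  have hL0 : 0 ≤ L := ge_of_tendsto hWl (by
    filter_upwards [eventually_ge_atTop a] with t ht using hW0 t ht)
  rcases hL0.eq_or_lt with h0 | h0
  · rwa [← h0] at hWl
  exfalso
  have hev : ∀ᶠ t in atTop, L / 2 ≤ W t := by
    filter_upwards [hWl.eventually (lt_mem_nhds (show L / 2 < L by linarith))] with t ht using ht.le
  obtain ⟨T, hT⟩ := (hev.and (eventually_ge_atTop a)).exists_forall_of_atTop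
  have hTa : a ≤ T := (hT T le_rfl).2
  have hA : AntitoneOn (fun t => E t + κ * (L / 2) * Real.log t) (Ici T) := by
    have hd : ∀ t ≥ T, HasDerivAt (fun t => E t + κ * (L / 2) * Real.log t)
        (E' t + κ * (L / 2) * t⁻¹) t := fun t ht =>
      (hE t (hTa.trans ht)).add ((Real.hasDerivAt_log (by linarith)).const_mul _)
    refine antitoneOn_of_deriv_nonpos (convex_Ici T)
      (fun t ht => (hd t ht).continuousAt.continuousWithinAt)
      (fun t ht => (hd t (interior_subset ht)).differentiableAt.differentiableWithinAt) ?_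
    intro t ht
    have ht : T ≤ t := interior_subset ht
    have hat := hTa.trans ht
    rw [(hd t ht).deriv]
    have h1 := hEh t hat
    have h2 := hh t hat
    have h3 : κ * (L / 2) * t⁻¹ ≤ κ * (W t / t) := by
      rw [div_eq_mul_inv (W t), ← mul_assoc]
      have : 0 < t := by linarith
      gcongr
      exact (hT t ht).1
    linarith
  have hlog : Tendsto (fun t => κ * (L / 2) * Real.log t) atTop atTop :=
    Real.tendsto_log_atTop.const_mul_atTop (by positivity)
  obtain ⟨t, h1, h2⟩ := ((hlog.eventually_gt_atTop (E T + κ * (L / 2) * Real.log T)).and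
    (eventually_ge_atTop T)).exists
  have := hA (show T ∈ Ici T from self_mem_Ici) (show t ∈ Ici T from h2) h2
  have h3 := hE0 t (hTa.trans h2)
  simp only at this
  linarith

theorem aux_E {H : Type*} [NormedAddCommGroup H] [InnerProductSpace ℝ H]
    (x v G : ℝ → H) (z acc G' : H) (β F A : ℝ → ℝ) (β' A' b α c lam' t : ℝ) (ht : 0 < t)
    (hx : HasDerivAt x (v t) t) (hv : HasDerivAt v acc t) (hG : HasDerivAt G G' t)
    (hβ : HasDerivAt β β' t) (hA : HasDerivAt A A' t)
    (hF : HasDerivAt F (inner ℝ (G t) (v t) - lam' / 2 * ‖G t‖ ^ 2) t)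
    (hAt : A t = t ^ 2 * (b - β' - β t / t) + t * β t * (α - 1 - c))
    (hode : acc + (α / t) • v t + β t • G' + b • G t = 0) :
    HasDerivAt (fun s => 1 / 2 * ‖c • (x s - z) + s • (v s + β s • G s)‖ ^ 2 + A s * F s
        + c * (α - 1 - c) / 2 * ‖x s - z‖ ^ 2)
      (A' * F t - A t * (lam' / 2 * ‖G t‖ ^ 2) - c * t * (b - β' - β t / t) * inner ℝ (G t) (x t - z)
        - t * (α - 1 - c) * ‖v t‖ ^ 2 - t ^ 2 * β t * (b - β' - β t / t) * ‖G t‖ ^ 2) t := by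
  have hacc : acc = - ((α / t) • v t + β t • G' + b • G t) := by
    rw [eq_neg_iff_add_eq_zero, ← hode]; abel
  have hu : HasDerivAt (fun s => c • (x s - z) + s • (v s + β s • G s))
      (-(α - 1 - c) • v t - (t * (b - β' - β t / t)) • G t) t := by
    have := ((hx.sub_const z).const_smul c).add
      ((hasDerivAt_id t).smul (hv.add (hβ.smul hG)))
    refine this.congr_deriv ?_
    simp only [id, hacc, Pi.add_apply, Pi.smul_apply']
    match_scalars <;> field_simp <;> ring
  have := ((hu.norm_sq.const_mul (1 / 2)).add (hA.mul hF)).add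
    ((hx.sub_const z).norm_sq.const_mul (c * (α - 1 - c) / 2))
  refine this.congr_deriv ?_
  set w := b - β' - β t / t with hw
  rw [hAt]
  simp only [inner_add_left, inner_sub_right, inner_smul_left, inner_smul_right, inner_neg_right,
    real_inner_self_eq_norm_sq, inner_sub_left, neg_smul, conj_trivial]
  rw [real_inner_comm (x t) (G t), real_inner_comm z (G t), real_inner_comm (v t) (G t)]
  ring

theorem aux_W {H : Type*} [NormedAddCommGroup H] [InnerProductSpace ℝ H]
    (v G : ℝ → H) (acc G' : H) (b F : ℝ → ℝ) (β b' α lam' t : ℝ) (ht : 0 < t)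
    (hv : HasDerivAt v acc t)
    (hb : HasDerivAt b b' t)
    (hF : HasDerivAt F (inner ℝ (G t) (v t) - lam' / 2 * ‖G t‖ ^ 2) t)
    (hode : acc + (α / t) • v t + β • G' + b t • G t = 0) :
    HasDerivAt (fun s => 1 / 2 * (s ^ 2 * ‖v s‖ ^ 2) + s ^ 2 * b s * F s)
      ((1 - α) * t * ‖v t‖ ^ 2 - t ^ 2 * β * inner ℝ (v t) G' + (2 * t * b t + t ^ 2 * b') * F t
        - t ^ 2 * b t * (lam' / 2 * ‖G t‖ ^ 2)) t := by
  have hacc : acc = - ((α / t) • v t + β • G' + b t • G t) := by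
    rw [eq_neg_iff_add_eq_zero, ← hode]; abel
  have h2 : HasDerivAt (fun s : ℝ => s ^ 2) (2 * t) t := by simpa using hasDerivAt_pow 2 t
  have := ((h2.mul hv.norm_sq).const_mul (1 / 2)).add ((h2.mul hb).mul hF)
  refine this.congr_deriv ?_
  rw [hacc]
  simp only [inner_add_right, inner_smul_right, inner_neg_right,
    real_inner_self_eq_norm_sq, Pi.mul_apply]
  rw [real_inner_comm (v t) (G t)]
  field_simp
  ring

set_option maxHeartbeats 2000000 in
theorem objective_values_little_o
    {H : Type*} [NormedAddCommGroup H] [InnerProductSpace ℝ H] [CompleteSpace H]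
    (Φ : H → EReal)
    (hΦbot : ∀ y, Φ y ≠ ⊥) (hΦproper : ∃ y, Φ y ≠ ⊤)
    (hΦconv : EConvexOn Φ) (hΦlsc : LowerSemicontinuous Φ)
    (t₀ α : ℝ) (ht₀ : 0 < t₀)
    (β b lam β' b' lam' w' : ℝ → ℝ)
    (hβnonneg : ∀ t ≥ t₀, 0 ≤ β t)
    (hbpos : ∀ t ≥ t₀, 0 < b t)
    (hlampos : ∀ t ≥ t₀, 0 < lam t)
    (hβ' : ∀ t ≥ t₀, HasDerivAt β (β' t) t)
    (hb' : ∀ t ≥ t₀, HasDerivAt b (b' t) t)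
    (hlam' : ∀ t ≥ t₀, HasDerivAt lam (lam' t) t)
    (hw' : ∀ t ≥ t₀, HasDerivAt (fun s => b s - β' s - β s / s) (w' t) t)
    (x v acc p G' : ℝ → H)
    (hx : ∀ t ≥ t₀, HasDerivAt x (v t) t)
    (hv : ∀ t ≥ t₀, HasDerivAt v (acc t) t)
    (hp : ∀ t ≥ t₀, IsProxPt Φ (lam t) (x t) (p t))
    (hG' : ∀ t ≥ t₀, HasDerivAt (fun s => (lam s)⁻¹ • (x s - p s)) (G' t) t)
    (hode : ∀ t ≥ t₀, acc t + (α / t) • v t + β t • G' t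
        + b t • ((lam t)⁻¹ • (x t - p t)) = 0)
    (hα : 1 < α)
    (hlammono : MonotoneOn lam (Set.Ici t₀))
    (hβmono : MonotoneOn β (Set.Ici t₀))
    (hw : ∀ t ≥ t₀, β' t + β t / t < b t)
    (hAs2 : ∃ ε, 0 < ε ∧ ε < α - 1 ∧
      ∀ t ≥ t₀, ε * b t ≤ (α - 3) * (b t - β' t - β t / t) - t * w' t)
    (hAs4 : ∫⁻ t in Set.Ici t₀, ENNReal.ofReal ((lam' t) ^ 2 * t ^ 3 * (β t) ^ 2 / (lam t) ^ 4
      - lam' t * t ^ 2 * b t / (2 * (lam t) ^ 2)) < ⊤)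
    (hAs : ∃ C > (0 : ℝ), ∀ t ≥ t₀, 2 * t * b t + t ^ 2 * b' t ≤ C * (t * b t))
    (z : H) (hz : ∀ y, Φ z ≤ Φ y)
    :
    Filter.Tendsto (fun t => t ^ 2 * b t * ((Φ (p t)).toReal - (Φ z).toReal))
      Filter.atTop (nhds 0) := by
  obtain ⟨ε, hε, hεα, hA2⟩ := hAs2
  obtain ⟨C, hC, hAC⟩ := hAs
  have hfin : ∀ t ≥ t₀, Φ (p t) ≠ ⊤ := by
    intro t ht htop
    obtain ⟨y, hy⟩ := hΦproper
    have := hp t ht y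
    rw [htop, EReal.top_add_coe, top_le_iff] at this
    exact (EReal.add_lt_top hy (EReal.coe_ne_top _)).ne this
  have hzfin : Φ z ≠ ⊤ := by
    obtain ⟨y, hy⟩ := hΦproper
    exact ((hz y).trans_lt (lt_top_iff_ne_top.2 hy)).ne
  obtain ⟨φ, hφ⟩ : ∃ φ : ℝ → ℝ, φ = fun t => (Φ (p t)).toReal - (Φ z).toReal := ⟨_, rfl⟩
  obtain ⟨G, hGd⟩ : ∃ G : ℝ → H, G = fun t => (lam t)⁻¹ • (x t - p t) := ⟨_, rfl⟩
  have hGe : ∀ t, (lam t)⁻¹ • (x t - p t) = G t := fun t => by rw [hGd]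
  simp only [hGe] at hG' hode
  have hφe : ∀ t, (Φ (p t)).toReal - (Φ z).toReal = φ t := fun t => by rw [hφ]
  simp only [hφe]
  have hpe : ∀ t ≥ t₀, p t = x t - lam t • G t := by
    intro t ht
    rw [← hGe, smul_inv_smul₀ (hlampos t ht).ne']; abel
  have hsub : ∀ t ≥ t₀, ∀ s ≥ t₀, φ t + inner ℝ (G t) (p s - p t) ≤ φ s := by
    intro t ht s hs
    have := aux_subgrad Φ hΦbot hΦconv (lam t) (hlampos t ht) (x t) (p t) (p s) (hp t ht)
      (hfin t ht) (hfin s hs)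
    rw [hGe] at this
    rw [← hφe, ← hφe]; linarith
  have hsubz : ∀ t ≥ t₀, φ t + lam t * ‖G t‖ ^ 2 ≤ inner ℝ (G t) (x t - z) := by
    intro t ht
    have := aux_subgrad Φ hΦbot hΦconv (lam t) (hlampos t ht) (x t) (p t) z (hp t ht)
      (hfin t ht) hzfin
    rw [hGe, hpe t ht, show z - (x t - lam t • G t) = lam t • G t - (x t - z) by abel,
      inner_sub_right, real_inner_smul_right, real_inner_self_eq_norm_sq, ← hpe t ht] at this
    rw [← hφe]; linarith
  have hφ0 : ∀ t ≥ t₀, 0 ≤ φ t := by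
    intro t ht
    rw [← hφe, sub_nonneg]
    exact EReal.toReal_le_toReal (hz _) (hΦbot z) (hfin t ht)
  clear hp hφe hφ hGd hGe hz hΦlsc hΦproper
  -- derivative facts
  obtain ⟨t₁, ht₁⟩ : ∃ t₁, t₁ = t₀ + 1 := ⟨_, rfl⟩
  have h01 : t₀ < t₁ := by linarith
  have hnear : ∀ t ≥ t₁, ∀ᶠ s in nhds t, t₀ ≤ s := fun t ht => by
    filter_upwards [lt_mem_nhds (h01.trans_le ht)] with s hs using hs.le
  have hpd : ∀ t ≥ t₁, HasDerivAt p (v t - lam' t • G t - lam t • G' t) t := by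
    intro t ht
    have ht0 : t ≥ t₀ := h01.le.trans ht
    have := (hx t ht0).sub ((hlam' t ht0).smul (hG' t ht0))
    refine (this.congr_deriv (by module)).congr_of_eventuallyEq ?_
    filter_upwards [hnear t ht] with s hs
    rw [hpe s hs]; rfl
  have hφd : ∀ t ≥ t₁, HasDerivAt φ (inner ℝ (G t) (v t - lam' t • G t - lam t • G' t)) t := by
    intro t ht
    have ht0 : t ≥ t₀ := h01.le.trans ht
    refine aux_phi_deriv φ p G _ _ t (hpd t ht) (hG' t ht0) ?_ ?_
    · filter_upwards [hnear t ht] with s hs using hsub t ht0 s hs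
    · filter_upwards [hnear t ht] with s hs using hsub s hs t ht0
  have hmon : ∀ t ≥ t₁, 0 ≤ inner ℝ (G' t) (v t - lam' t • G t - lam t • G' t) := by
    intro t ht
    have ht0 : t ≥ t₀ := h01.le.trans ht
    refine aux_mono p G _ _ t (hpd t ht) (hG' t ht0) ?_
    filter_upwards [hnear t ht] with s hs
    have h1 := hsub t ht0 s hs
    have h2 := hsub s hs t ht0
    rw [← neg_sub (p s) (p t), inner_neg_right] at h2
    rw [inner_sub_left]; linarith
  have hlam'0 : ∀ t ≥ t₁, 0 ≤ lam' t := by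
    intro t ht
    have ht0 : t ≥ t₀ := h01.le.trans ht
    refine ge_of_tendsto (hasDerivAt_iff_tendsto_slope.1 (hlam' t ht0)) ?_
    filter_upwards [nhdsWithin_le_nhds (hnear t ht)] with s hs
    rw [slope_def_field]
    rcases le_total s t with h | h
    · exact div_nonneg_of_nonpos (sub_nonpos.2 (hlammono hs ht0 h)) (sub_nonpos.2 h)
    · exact div_nonneg (sub_nonneg.2 (hlammono ht0 hs h)) (sub_nonneg.2 h)
  have hkey : ∀ t ≥ t₁, - inner ℝ (v t) (G' t) ≤ lam' t / lam t * ‖G t‖ * ‖v t‖ := fun t ht =>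
    aux_point _ _ _ _ _ (hlampos t (h01.le.trans ht)) (hlam'0 t ht) (hmon t ht)
  obtain ⟨F, hFd⟩ : ∃ F : ℝ → ℝ, F = fun t => φ t + lam t / 2 * ‖G t‖ ^ 2 := ⟨_, rfl⟩
  have hFe : ∀ t, F t = φ t + lam t / 2 * ‖G t‖ ^ 2 := fun t => by rw [hFd]
  have hF' : ∀ t ≥ t₁, HasDerivAt F (inner ℝ (G t) (v t) - lam' t / 2 * ‖G t‖ ^ 2) t := by
    intro t ht
    have ht0 : t ≥ t₀ := h01.le.trans ht
    rw [hFd]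
    have := (hφd t ht).add (((hlam' t ht0).div_const 2).mul (hG' t ht0).norm_sq)
    refine this.congr_deriv ?_
    simp only [inner_sub_right, real_inner_smul_right, real_inner_self_eq_norm_sq]
    ring
  have hF0 : ∀ t ≥ t₀, 0 ≤ F t := fun t ht => by
    rw [hFe]; have := hφ0 t ht; have := hlampos t ht; positivity
  have hφF : ∀ t ≥ t₀, φ t ≤ F t := fun t ht => by
    rw [hFe]; have := hlampos t ht; have : 0 ≤ lam t / 2 * ‖G t‖ ^ 2 := by positivity
    linarith
  -- the energies
  obtain ⟨c, hc⟩ : ∃ c, c = α - 1 - ε / 2 := ⟨_, rfl⟩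
  have hcpos : 0 < c := by linarith
  have hδ : α - 1 - c = ε / 2 := by linarith
  obtain ⟨A, hAd⟩ : ∃ A : ℝ → ℝ, A = fun t => t ^ 2 * (b t - β' t - β t / t)
    + t * β t * (α - 1 - c) := ⟨_, rfl⟩
  have hAe : ∀ t, A t = t ^ 2 * (b t - β' t - β t / t) + t * β t * (α - 1 - c) :=
    fun t => by rw [hAd]
  have hA' : ∀ t ≥ t₀, HasDerivAt A (2 * t * (b t - β' t - β t / t) + t ^ 2 * w' t
      + (β t + t * β' t) * (α - 1 - c)) t := by
    intro t ht
    rw [hAd]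
    have h2 : HasDerivAt (fun s : ℝ => s ^ 2) (2 * t) t := by simpa using hasDerivAt_pow 2 t
    have := (h2.mul (hw' t ht)).add
      (((hasDerivAt_id t).mul (hβ' t ht)).mul_const (α - 1 - c))
    exact this.congr_deriv (by simp)
  have hA0 : ∀ t ≥ t₀, 0 ≤ A t := by
    intro t ht
    have h1 := hw t ht
    have h2 := hβnonneg t ht
    have h3 : 0 ≤ b t - β' t - β t / t := by linarith
    have h4 : 0 < t := by linarith
    rw [hAe, hδ]; positivity
  obtain ⟨E, hEd⟩ : ∃ E : ℝ → ℝ, E = fun s => 1 / 2 * ‖c • (x s - z) + s • (v s + β s • G s)‖ ^ 2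
    + A s * F s + c * (α - 1 - c) / 2 * ‖x s - z‖ ^ 2 := ⟨_, rfl⟩
  have hEe : ∀ s, E s = 1 / 2 * ‖c • (x s - z) + s • (v s + β s • G s)‖ ^ 2
    + A s * F s + c * (α - 1 - c) / 2 * ‖x s - z‖ ^ 2 := fun s => by rw [hEd]
  have hE' : ∀ t ≥ t₁, HasDerivAt E _ t := fun t ht => by
    have ht0 : t ≥ t₀ := h01.le.trans ht
    rw [hEd]
    exact aux_E x v G z (acc t) (G' t) β F A (β' t) _ (b t) α c (lam' t) t (by linarith)
      (hx t ht0) (hv t ht0) (hG' t ht0) (hβ' t ht0) (hA' t ht0) (hF' t ht) (hAe t) (hode t ht0)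
  have hElow : ∀ t ≥ t₀, c * (ε / 2) / 2 * ‖x t - z‖ ^ 2 ≤ E t := by
    intro t ht
    rw [hEe, hδ]
    have h1 := mul_nonneg (hA0 t ht) (hF0 t ht)
    have h2 := sq_nonneg ‖c • (x t - z) + t • (v t + β t • G t)‖
    linarith
  have hE0 : ∀ t ≥ t₀, 0 ≤ E t := fun t ht => le_trans (by positivity) (hElow t ht)
  have hEh : ∀ t ≥ t₁, _ ≤ - (ε / 2 * (t * b t * F t + t * ‖v t‖ ^ 2)) := fun t ht => by
    have ht0 : t ≥ t₀ := h01.le.trans ht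
    have htp : 0 < t := by linarith
    have hw0 : 0 ≤ b t - β' t - β t / t := by have := hw t ht0; linarith
    have hsz : F t ≤ inner ℝ (G t) (x t - z) := by
      have h1 := hsubz t ht0
      have h2 : 0 ≤ lam t * ‖G t‖ ^ 2 := by have := hlampos t ht0; positivity
      rw [hFe]; linarith
    have a1 : 0 ≤ A t * (lam' t / 2 * ‖G t‖ ^ 2) := by
      have := hlam'0 t ht
      exact mul_nonneg (hA0 t ht0) (by positivity)
    have a2 : c * t * (b t - β' t - β t / t) * F t ≤
        c * t * (b t - β' t - β t / t) * inner ℝ (G t) (x t - z) :=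
      mul_le_mul_of_nonneg_left hsz (by positivity)
    have a3 : 0 ≤ t ^ 2 * β t * (b t - β' t - β t / t) * ‖G t‖ ^ 2 := by
      have := hβnonneg t ht0
      positivity
    have a4 := mul_le_mul_of_nonneg_left (hA2 t ht0) (mul_nonneg htp.le (hF0 t ht0))
    have a5 : (2 * t * (b t - β' t - β t / t) + t ^ 2 * w' t + (β t + t * β' t) * (α - 1 - c)) * F t
        - c * t * (b t - β' t - β t / t) * F t
        = - (t * F t * ((α - 3) * (b t - β' t - β t / t) - t * w' t))
          + t * F t * ((α - 1 - c) * b t) := by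
      field_simp
      ring
    show (2 * t * (b t - β' t - β t / t) + t ^ 2 * w' t + (β t + t * β' t) * (α - 1 - c)) * F t
      - A t * (lam' t / 2 * ‖G t‖ ^ 2) -
      c * t * (b t - β' t - β t / t) * inner ℝ (G t) (x t - z)
        - t * (α - 1 - c) * ‖v t‖ ^ 2 - t ^ 2 * β t * (b t - β' t - β t / t) * ‖G t‖ ^ 2 ≤ _
    rw [hδ] at a5 ⊢
    nlinarith
  have hh0 : ∀ t ≥ t₁, 0 ≤ t * b t * F t + t * ‖v t‖ ^ 2 := by
    intro t ht
    have ht0 : t ≥ t₀ := h01.le.trans ht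
    have h1 := hF0 t ht0
    have h2 := hbpos t ht0
    have htp : 0 < t := by linarith
    positivity
  have hEanti : AntitoneOn E (Ici t₁) := by
    refine antitoneOn_of_deriv_nonpos (convex_Ici t₁)
      (fun t ht => (hE' t ht).continuousAt.continuousWithinAt)
      (fun t ht => (hE' t (interior_subset ht)).differentiableAt.differentiableWithinAt) ?_
    intro t ht
    have ht : t₁ ≤ t := interior_subset ht
    rw [(hE' t ht).deriv]
    refine (hEh t ht).trans ?_
    have := mul_nonneg (half_pos hε).le (hh0 t ht)
    linarith
  obtain ⟨M, hM0, hM⟩ : ∃ M, 0 ≤ M ∧ ∀ t ≥ t₁, lam t ^ 2 * ‖G t‖ ^ 2 ≤ M := by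
    refine ⟨E t₁ / (c * (ε / 2) / 2), div_nonneg (hE0 _ h01.le) (by positivity), ?_⟩
    intro t ht
    have ht0 : t ≥ t₀ := h01.le.trans ht
    rw [le_div_iff₀ (by positivity)]
    have h1 := hEanti (mem_Ici.2 le_rfl) (mem_Ici.2 ht) ht
    have h2 := hElow t ht0
    have h3 := hsubz t ht0
    have h4 := hφ0 t ht0
    have h5 := real_inner_le_norm (G t) (x t - z)
    have hl := hlampos t ht0
    have h6 : lam t * ‖G t‖ ≤ ‖x t - z‖ := by
      rcases (norm_nonneg (G t)).eq_or_lt with h | h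
      · rw [← h]; simp
      · refine le_of_mul_le_mul_left ?_ h
        nlinarith
    have h7 : lam t ^ 2 * ‖G t‖ ^ 2 ≤ ‖x t - z‖ ^ 2 := by
      rw [← mul_pow]; gcongr
    calc lam t ^ 2 * ‖G t‖ ^ 2 * (c * (ε / 2) / 2) ≤ ‖x t - z‖ ^ 2 * (c * (ε / 2) / 2) := by gcongr
      _ ≤ E t₁ := by linarith
  -- the integrable majorant
  obtain ⟨r, hrd⟩ : ∃ r : ℝ → ℝ, r = fun t => (lam' t) ^ 2 * t ^ 3 * (β t) ^ 2 / (lam t) ^ 4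
      - lam' t * t ^ 2 * b t / (2 * (lam t) ^ 2) := ⟨_, rfl⟩
  have hre : ∀ t, (lam' t) ^ 2 * t ^ 3 * (β t) ^ 2 / (lam t) ^ 4
      - lam' t * t ^ 2 * b t / (2 * (lam t) ^ 2) = r t := fun t => by rw [hrd]
  have hcm : ∀ (f f' : ℝ → ℝ), (∀ t ≥ t₀, HasDerivAt f (f' t) t) →
      AEMeasurable f (volume.restrict (Ici t₀)) := fun f f' hf =>
    ContinuousOn.aemeasurable (fun t ht => (hf t ht).continuousAt.continuousWithinAt)
      measurableSet_Ici
  have hlm : AEMeasurable lam' (volume.restrict (Ici t₀)) := by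
    refine (measurable_deriv lam).aemeasurable.congr ?_
    filter_upwards [ae_restrict_mem measurableSet_Ici] with t ht using (hlam' t ht).deriv
  have hrm : AEMeasurable r (volume.restrict (Ici t₀)) := by
    rw [hrd]
    have m1 := hcm β β' hβ'
    have m2 := hcm b b' hb'
    have m3 := hcm lam lam' hlam'
    have m4 : AEMeasurable (fun t : ℝ => t) (volume.restrict (Ici t₀)) := aemeasurable_id
    exact ((((hlm.pow_const 2).mul (m4.pow_const 3)).mul (m1.pow_const 2)).div
      (m3.pow_const 4)).sub (((hlm.mul (m4.pow_const 2)).mul m2).div ((m3.pow_const 2).const_mul 2))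
  have hqint : IntegrableOn (fun t => max (r t) 0) (Ici t₁) := by
    refine IntegrableOn.mono_set (t := Ici t₀) ?_ (Ici_subset_Ici.2 h01.le)
    refine ⟨(hrm.max aemeasurable_const).aestronglyMeasurable, ?_⟩
    rw [hasFiniteIntegral_iff_ofReal (f := fun t => max (r t) 0) (Eventually.of_forall fun t => le_max_right _ _)]
    simp only [hre] at hAs4
    refine lt_of_eq_of_lt (lintegral_congr fun t => ?_) hAs4
    rw [ENNReal.ofReal_max]; simp
  -- conclusion
  have hlim : Tendsto (fun s => 1 / 2 * (s ^ 2 * ‖v s‖ ^ 2) + s ^ 2 * b s * F s) atTop (nhds 0) := by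
    refine aux_limit E (fun s => 1 / 2 * (s ^ 2 * ‖v s‖ ^ 2) + s ^ 2 * b s * F s)
      (fun t => ((1 - α) * t * ‖v t‖ ^ 2 - t ^ 2 * β t * inner ℝ (v t) (G' t)
        + (2 * t * b t + t ^ 2 * b' t) * F t
        - t ^ 2 * b t * (lam' t / 2 * ‖G t‖ ^ 2))) _ (fun t => max (r t) 0)
      (fun t => ε / 2 * (t * b t * F t + t * ‖v t‖ ^ 2)) t₁ (2 / ε * (C + 1)) M (ε / 2)
      (ht₀.trans h01) hM0 (half_pos hε) (fun t ht => hE0 t (h01.le.trans ht)) ?_ (by positivity)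
      hE' hEh ?_ ?_ ?_ (fun t => le_max_right _ _) hqint
    · intro t ht
      have ht0 : t ≥ t₀ := h01.le.trans ht
      have h1 := hF0 t ht0
      have h2 := hbpos t ht0
      positivity
    · intro t ht
      have htp : 0 < t := by linarith
      have : (1 / 2 * (t ^ 2 * ‖v t‖ ^ 2) + t ^ 2 * b t * F t) / t
        = t * b t * F t + 1 / 2 * (t * ‖v t‖ ^ 2) := by field_simp; ring
      simp only [this]
      have h3 : 0 ≤ t * ‖v t‖ ^ 2 := by positivity
      refine mul_le_mul_of_nonneg_left ?_ (half_pos hε).le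
      linarith
    · intro t ht
      have ht0 : t ≥ t₀ := h01.le.trans ht
      exact aux_W v G (acc t) (G' t) b F (β t) (b' t) α (lam' t) t (by linarith)
        (hv t ht0) (hb' t ht0) (hF' t ht) (hode t ht0)
    · intro t ht
      have ht0 : t ≥ t₀ := h01.le.trans ht
      have htp : 0 < t := by linarith
      have hl := hlampos t ht0
      have hl' := hlam'0 t ht
      have hβ0 := hβnonneg t ht0
      have hF0t := hF0 t ht0
      have hb0 := hbpos t ht0
      have e1 : 2 / ε * (C + 1) * (ε / 2 * (t * b t * F t + t * ‖v t‖ ^ 2))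
        = (C + 1) * (t * b t * F t + t * ‖v t‖ ^ 2) := by field_simp
      have e2 : (2 * t * b t + t ^ 2 * b' t) * F t ≤ C * (t * b t) * F t :=
        mul_le_mul_of_nonneg_right (hAC t ht0) hF0t
      have e3 : t ^ 2 * β t * (- inner ℝ (v t) (G' t)) ≤
          t ^ 2 * β t * (lam' t / lam t * ‖G t‖ * ‖v t‖) :=
        mul_le_mul_of_nonneg_left (hkey t ht) (by positivity)
      have e4 : t ^ 2 * β t * (lam' t / lam t * ‖G t‖ * ‖v t‖) ≤
          t * (t * β t * (lam' t / lam t) * ‖G t‖) ^ 2 + t * ‖v t‖ ^ 2 := by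
        have : 0 ≤ t * ((t * β t * (lam' t / lam t) * ‖G t‖ - ‖v t‖) ^ 2
          + (t * β t * (lam' t / lam t) * ‖G t‖) ^ 2 + ‖v t‖ ^ 2) := by positivity
        nlinarith
      have e5 : t * (t * β t * (lam' t / lam t) * ‖G t‖) ^ 2 - t ^ 2 * b t * (lam' t / 2 * ‖G t‖ ^ 2)
          = lam t ^ 2 * ‖G t‖ ^ 2 * r t := by
        rw [← hre]; field_simp
      have e6 : lam t ^ 2 * ‖G t‖ ^ 2 * r t ≤ M * max (r t) 0 :=
        calc lam t ^ 2 * ‖G t‖ ^ 2 * r t ≤ lam t ^ 2 * ‖G t‖ ^ 2 * max (r t) 0 := by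
              gcongr; exact le_max_left _ _
          _ ≤ M * max (r t) 0 := by
              gcongr
              exact hM t ht
      have e7 : (1 - α) * t * ‖v t‖ ^ 2 ≤ 0 := by
        have : 0 ≤ (α - 1) * (t * ‖v t‖ ^ 2) := mul_nonneg (by linarith) (by positivity)
        linarith
      have e8 : 0 ≤ t * b t * F t := by positivity
      have e9 : 0 ≤ C * (t * ‖v t‖ ^ 2) := by positivity
      show (1 - α) * t * ‖v t‖ ^ 2 - t ^ 2 * β t * inner ℝ (v t) (G' t)
        + (2 * t * b t + t ^ 2 * b' t) * F t - t ^ 2 * b t * (lam' t / 2 * ‖G t‖ ^ 2) ≤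
        2 / ε * (C + 1) * (ε / 2 * (t * b t * F t + t * ‖v t‖ ^ 2)) + M * max (r t) 0
      rw [e1]
      linarith
  refine squeeze_zero' ?_ ?_ hlim
  · filter_upwards [eventually_ge_atTop t₀] with t ht
    have h1 := hφ0 t ht
    have h2 := hbpos t ht
    positivity
  · filter_upwards [eventually_ge_atTop t₀] with t ht
    have h1 := hφF t ht
    have h2 := hbpos t ht
    have h3 : t ^ 2 * b t * φ t ≤ t ^ 2 * b t * F t := by gcongr
    have h4 : 0 ≤ t ^ 2 * ‖v t‖ ^ 2 := by positivity
    linarith
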